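/- Let 0 ≤ α < γ ≤ 1. Then the dual-based bilinear formulation computes the α–γ expectation: the infimum, over all (s, θ, w') with s ∈ ℝ, θ ∈ ℝ^n satisfying θ_i ≥ 0 and θ_i + s·p_i ≥ T_i·p_i for all i, and w' ∈ W_γ, of the quantity (1/(γ−α)) · ( (1−α)·s + Σ_{i=1}^n θ_i − Σ_{i=1}^n T_i p_i w'_i ), equals E_{α,γ}(μ_T) = (1/(γ−α)) ∫_α^γ F⁻¹(s) ds. -/

import Mathlib

open MeasureTheory

/-- The discrete measure `μ_T = Σ_i p_i δ_{T_i}`. -/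
noncomputable def muT {n : ℕ} (p T : Fin n → ℝ) : Measure ℝ :=
  ∑ i, ENNReal.ofReal (p i) • Measure.dirac (T i)

/-- Generalized inverse of the cdf `t ↦ μ_T (Iic t)` of `μ_T`. -/
noncomputable def dFinv {n : ℕ} (p T : Fin n → ℝ) (q : ℝ) : ℝ :=
  sInf {t : ℝ | q ≤ (muT p T (Set.Iic t)).toReal}

/-- The α–γ expectation of `μ_T`. -/
noncomputable def dEag {n : ℕ} (p T : Fin n → ℝ) (a g : ℝ) : ℝ :=
  (1 / (g - a)) * ∫ s in a..g, dFinv p T s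

/-- The polytope `W_β = {w ∈ [0,1]^n : Σ_i w_i p_i = 1 − β}`. -/
def Wset {n : ℕ} (p : Fin n → ℝ) (β : ℝ) : Set (Fin n → ℝ) :=
  {w | (∀ i, w i ∈ Set.Icc (0:ℝ) 1) ∧ ∑ i, w i * p i = 1 - β}

/-- `IsQuantile p T β s` says that `s` separates the values of the generalized inverse below level `β`
from those above it. -/
def IsQuantile {n : ℕ} (p T : Fin n → ℝ) (β s : ℝ) : Prop :=
  (∀ q ∈ Set.Ioo 0 β, dFinv p T q ≤ s) ∧ ∀ q ∈ Set.Ioo β 1, s ≤ dFinv p T q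

section DiscreteQuantile

variable {n : ℕ} {p T : Fin n → ℝ}

lemma isProbabilityMeasure_muT (hp : ∀ i, 0 < p i) (hsum : ∑ i, p i = 1) :
    IsProbabilityMeasure (muT p T) := by
  refine ⟨?_⟩
  simp [muT, Measure.finsetSum_apply, ← ENNReal.ofReal_sum_of_nonneg (fun i _ => (hp i).le), hsum]

lemma muT_Iic_of_forall_lt {t : ℝ} (h : ∀ i, t < T i) : muT p T (Set.Iic t) = 0 := by
  simp [muT, Measure.finsetSum_apply, h]

lemma muT_Iic_of_forall_le (hp : ∀ i, 0 < p i) (hsum : ∑ i, p i = 1) {t : ℝ}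
    (h : ∀ i, T i ≤ t) : muT p T (Set.Iic t) = 1 := by
  simp [muT, Measure.finsetSum_apply, h,
    ← ENNReal.ofReal_sum_of_nonneg (fun i _ => (hp i).le), hsum]

lemma dFinv_le_iff (hp : ∀ i, 0 < p i) (hsum : ∑ i, p i = 1) {q : ℝ}
    (hq : q ∈ Set.Ioo (0 : ℝ) 1) (t : ℝ) :
    dFinv p T q ≤ t ↔ q ≤ (muT p T (Set.Iic t)).toReal := by
  have := isProbabilityMeasure_muT (T := T) hp hsum
  have hcdf : ∀ t, (muT p T (Set.Iic t)).toReal = ProbabilityTheory.cdf (muT p T) t :=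
    fun t => (ProbabilityTheory.cdf_eq_real _ t).symm
  simp only [dFinv, hcdf]
  have hmono := ProbabilityTheory.monotone_cdf (muT p T)
  have hne : {t | q ≤ ProbabilityTheory.cdf (muT p T) t}.Nonempty :=
    ((ProbabilityTheory.tendsto_cdf_atTop (muT p T)).eventually_const_le hq.2).exists
  have hbdd : BddBelow {t | q ≤ ProbabilityTheory.cdf (muT p T) t} := by
    obtain ⟨m, hm⟩ :=
      ((ProbabilityTheory.tendsto_cdf_atBot (muT p T)).eventually_lt_const hq.1).exists
    exact ⟨m, fun t ht => (hmono.reflect_lt (hm.trans_le ht)).le⟩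
  refine ⟨fun h => ?_, fun h => csInf_le hbdd h⟩
  rw [← StieltjesFunction.iInf_Ioi_eq]
  refine le_ciInf fun r => ?_
  obtain ⟨u, hu, hur⟩ := exists_lt_of_csInf_lt hne (h.trans_lt r.2)
  exact le_trans hu (hmono hur.le)

lemma monotoneOn_dFinv (hp : ∀ i, 0 < p i) (hsum : ∑ i, p i = 1) :
    MonotoneOn (dFinv p T) (Set.Ioo 0 1) := fun _ hx _ hy hxy =>
  (dFinv_le_iff hp hsum hx _).2 (hxy.trans ((dFinv_le_iff hp hsum hy _).1 le_rfl))

lemma exists_isQuantile (hp : ∀ i, 0 < p i) (hsum : ∑ i, p i = 1) {β : ℝ}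
    (h0 : 0 ≤ β) (h1 : β ≤ 1) : ∃ s, IsQuantile p T β s := by
  rcases h0.eq_or_lt with rfl | h0
  · obtain ⟨m, hm⟩ := (Set.finite_range T).bddBelow
    refine ⟨m, by simp, fun q hq => ?_⟩
    by_contra! hlt
    have := (dFinv_le_iff (T := T) hp hsum hq _).1 le_rfl
    rw [muT_Iic_of_forall_lt fun i => hlt.trans_le (hm ⟨i, rfl⟩)] at this
    exact absurd hq.1 (by simpa using this)
  rcases h1.eq_or_lt with rfl | h1
  · obtain ⟨m, hm⟩ := (Set.finite_range T).bddAbove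
    refine ⟨m, fun q hq => (dFinv_le_iff hp hsum hq _).2 ?_, by simp⟩
    rw [muT_Iic_of_forall_le hp hsum fun i => hm ⟨i, rfl⟩]
    simpa using hq.2.le
  · exact ⟨dFinv p T β,
      fun q hq => monotoneOn_dFinv hp hsum ⟨hq.1, hq.2.trans h1⟩ ⟨h0, h1⟩ hq.2.le,
      fun q hq => monotoneOn_dFinv hp hsum ⟨h0, h1⟩ ⟨h0.trans hq.1, hq.2⟩ hq.1.le⟩

lemma aemeasurable_dFinv (hp : ∀ i, 0 < p i) (hsum : ∑ i, p i = 1) :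
    AEMeasurable (dFinv p T) (volume.restrict (Set.Ioo 0 1)) :=
  aemeasurable_restrict_of_monotoneOn measurableSet_Ioo (monotoneOn_dFinv hp hsum)

lemma map_dFinv (hp : ∀ i, 0 < p i) (hsum : ∑ i, p i = 1) :
    (volume.restrict (Set.Ioo 0 1)).map (dFinv p T) = muT p T := by
  have := isProbabilityMeasure_muT (T := T) hp hsum
  refine Measure.ext_of_Iic _ _ fun t => ?_
  rw [Measure.map_apply_of_aemeasurable (aemeasurable_dFinv hp hsum) measurableSet_Iic,
    Measure.restrict_apply' measurableSet_Ioo]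
  set c := (muT p T (Set.Iic t)).toReal with hc
  have hc1 : c ≤ 1 := ENNReal.toReal_le_of_le_ofReal zero_le_one (by simpa using prob_le_one)
  have hset : dFinv p T ⁻¹' Set.Iic t ∩ Set.Ioo 0 1 = Set.Ioc 0 c ∩ Set.Ioo 0 1 := by
    ext q
    simp only [Set.mem_inter_iff, Set.mem_preimage, Set.mem_Iic, Set.mem_Ioc]
    refine and_congr_left fun hq => ?_
    rw [dFinv_le_iff hp hsum hq]
    exact ⟨fun h => ⟨hq.1, h⟩, fun h => h.2⟩
  rw [hset, measure_congr ((Filter.EventuallyEq.refl _ _).inter Ioo_ae_eq_Ioc),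
    Set.inter_eq_left.2 (Set.Ioc_subset_Ioc_right hc1), Real.volume_Ioc, sub_zero, hc,
    ENNReal.ofReal_toReal (measure_ne_top _ _)]

lemma integrable_muT (p T : Fin n → ℝ) (f : ℝ → ℝ) : Integrable f (muT p T) :=
  integrable_finsetSum_measure.2 fun _ _ =>
    (integrable_dirac (by simp)).smul_measure ENNReal.ofReal_ne_top

lemma intervalIntegrable_comp_dFinv (hp : ∀ i, 0 < p i) (hsum : ∑ i, p i = 1)
    {f : ℝ → ℝ} (hf : Measurable f) {a b : ℝ} (ha : a ∈ Set.Icc (0 : ℝ) 1)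
    (hb : b ∈ Set.Icc (0 : ℝ) 1) :
    IntervalIntegrable (fun q => f (dFinv p T q)) volume a b := by
  have h : IntervalIntegrable (fun q => f (dFinv p T q)) volume 0 1 := by
    rw [intervalIntegrable_iff_integrableOn_Ioo_of_le zero_le_one]
    have := integrable_muT p T f
    rw [← map_dFinv hp hsum] at this
    exact (integrable_map_measure hf.aestronglyMeasurable (aemeasurable_dFinv hp hsum)).1 this
  refine h.mono_set ?_
  rw [Set.uIcc_of_le zero_le_one]
  exact Set.uIcc_subset_Icc ha hb

lemma integral_comp_dFinv (hp : ∀ i, 0 < p i) (hsum : ∑ i, p i = 1)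
    {f : ℝ → ℝ} (hf : Measurable f) :
    ∫ q in 0..1, f (dFinv p T q) = ∑ i, p i * f (T i) := by
  rw [intervalIntegral.integral_of_le zero_le_one, ← restrict_Ioo_eq_restrict_Ioc,
    ← integral_map (aemeasurable_dFinv hp hsum) hf.aestronglyMeasurable, map_dFinv hp hsum, muT,
    integral_finsetSum_measure fun i _ =>
      (integrable_dirac (by simp)).smul_measure ENNReal.ofReal_ne_top]
  exact Finset.sum_congr rfl fun i _ => by
    rw [integral_smul_measure, integral_dirac, ENNReal.toReal_ofReal (hp i).le, smul_eq_mul]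

lemma integral_comp_dFinv_split (hp : ∀ i, 0 < p i) (hsum : ∑ i, p i = 1)
    {f : ℝ → ℝ} (hf : Measurable f) {β : ℝ} (hβ : β ∈ Set.Icc (0 : ℝ) 1) :
    ∑ i, p i * f (T i) =
      (∫ q in 0..β, f (dFinv p T q)) + ∫ q in β..1, f (dFinv p T q) := by
  rw [← integral_comp_dFinv hp hsum hf, intervalIntegral.integral_add_adjacent_intervals] <;>
    exact intervalIntegrable_comp_dFinv hp hsum hf (by simp_all) (by simp_all)

lemma integral_dFinv_sub (hp : ∀ i, 0 < p i) (hsum : ∑ i, p i = 1)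
    {β : ℝ} (hβ : β ∈ Set.Icc (0 : ℝ) 1) (s : ℝ) :
    ∫ q in β..1, (dFinv p T q - s) = (∫ q in β..1, dFinv p T q) - (1 - β) * s := by
  have hint : IntervalIntegrable (dFinv p T) volume β 1 :=
    intervalIntegrable_comp_dFinv hp hsum measurable_id hβ (by simp)
  rw [intervalIntegral.integral_sub hint (by simp)]
  simp

/-- Every `s` yields an upper bound for the upper tail integral of the generalized inverse. -/
lemma integral_dFinv_le (hp : ∀ i, 0 < p i) (hsum : ∑ i, p i = 1)
    {β : ℝ} (hβ : β ∈ Set.Icc (0 : ℝ) 1) (s : ℝ) :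
    ∫ q in β..1, dFinv p T q ≤ (1 - β) * s + ∑ i, p i * max (T i - s) 0 := by
  have hf : Measurable fun x : ℝ => max (x - s) 0 := by fun_prop
  have hg : Measurable fun x : ℝ => x - s := by fun_prop
  have hlow : 0 ≤ ∫ q in 0..β, max (dFinv p T q - s) 0 :=
    intervalIntegral.integral_nonneg hβ.1 fun _ _ => le_max_right _ _
  have hupp : ∫ q in β..1, (dFinv p T q - s) ≤ ∫ q in β..1, max (dFinv p T q - s) 0 :=
    intervalIntegral.integral_mono_on_of_le_Ioo hβ.2
      (intervalIntegrable_comp_dFinv hp hsum hg hβ (by simp))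
      (intervalIntegrable_comp_dFinv hp hsum hf hβ (by simp)) fun _ _ => le_max_left _ _
  rw [integral_dFinv_sub hp hsum hβ] at hupp
  rw [integral_comp_dFinv_split hp hsum hf hβ]
  linarith

/-- At a quantile the bound `integral_dFinv_le` is attained. -/
lemma IsQuantile.integral_dFinv_eq (hp : ∀ i, 0 < p i) (hsum : ∑ i, p i = 1)
    {β s : ℝ} (hβ : β ∈ Set.Icc (0 : ℝ) 1) (hs : IsQuantile p T β s) :
    ∫ q in β..1, dFinv p T q = (1 - β) * s + ∑ i, p i * max (T i - s) 0 := by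
  have hf : Measurable fun x : ℝ => max (x - s) 0 := by fun_prop
  have hlow : ∫ q in 0..β, max (dFinv p T q - s) 0 = ∫ q in 0..β, (0 : ℝ) := by
    refine intervalIntegral.integral_congr_uIoo fun q hq => ?_
    rw [Set.uIoo_of_le hβ.1] at hq
    exact max_eq_right (sub_nonpos.2 (hs.1 q hq))
  have hupp : ∫ q in β..1, max (dFinv p T q - s) 0 = ∫ q in β..1, (dFinv p T q - s) := by
    refine intervalIntegral.integral_congr_uIoo fun q hq => ?_
    rw [Set.uIoo_of_le hβ.2] at hq
    exact max_eq_left (sub_nonneg.2 (hs.2 q hq))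
  rw [integral_comp_dFinv_split hp hsum hf hβ, hlow, hupp, integral_dFinv_sub hp hsum hβ]
  simp

lemma IsQuantile.sum_lt_le (hp : ∀ i, 0 < p i) (hsum : ∑ i, p i = 1)
    {β s : ℝ} (hβ : β ∈ Set.Icc (0 : ℝ) 1) (hs : IsQuantile p T β s) :
    ∑ i, p i * (if s < T i then 1 else 0) ≤ 1 - β := by
  have hf : Measurable fun x : ℝ => if s < x then (1 : ℝ) else 0 :=
    Measurable.ite measurableSet_Ioi measurable_const measurable_const
  have hlow : ∫ q in 0..β, (if s < dFinv p T q then (1 : ℝ) else 0) = ∫ q in 0..β, (0 : ℝ) := by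
    refine intervalIntegral.integral_congr_uIoo fun q hq => ?_
    rw [Set.uIoo_of_le hβ.1] at hq
    exact if_neg (hs.1 q hq).not_gt
  have hupp : ∫ q in β..1, (if s < dFinv p T q then (1 : ℝ) else 0) ≤ ∫ q in β..1, (1 : ℝ) :=
    intervalIntegral.integral_mono_on_of_le_Ioo hβ.2
      (intervalIntegrable_comp_dFinv hp hsum hf hβ (by simp)) (by simp)
      fun _ _ => by split_ifs <;> simp
  rw [integral_comp_dFinv_split hp hsum hf hβ, hlow]
  simpa using hupp

lemma IsQuantile.le_sum_le (hp : ∀ i, 0 < p i) (hsum : ∑ i, p i = 1)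
    {β s : ℝ} (hβ : β ∈ Set.Icc (0 : ℝ) 1) (hs : IsQuantile p T β s) :
    1 - β ≤ ∑ i, p i * (if s ≤ T i then 1 else 0) := by
  have hf : Measurable fun x : ℝ => if s ≤ x then (1 : ℝ) else 0 :=
    Measurable.ite measurableSet_Ici measurable_const measurable_const
  have hlow : 0 ≤ ∫ q in 0..β, (if s ≤ dFinv p T q then (1 : ℝ) else 0) :=
    intervalIntegral.integral_nonneg hβ.1 fun _ _ => by split_ifs <;> simp
  have hupp : ∫ q in β..1, (if s ≤ dFinv p T q then (1 : ℝ) else 0) = ∫ q in β..1, (1 : ℝ) := by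
    refine intervalIntegral.integral_congr_uIoo fun q hq => ?_
    rw [Set.uIoo_of_le hβ.2] at hq
    exact if_pos (hs.2 q hq)
  rw [integral_comp_dFinv_split hp hsum hf hβ, hupp]
  simpa using hlow

lemma sum_mul_le_of_mem_Wset (hp : ∀ i, 0 < p i) {β : ℝ} {w : Fin n → ℝ}
    (hw : w ∈ Wset p β) (s : ℝ) :
    ∑ i, T i * p i * w i ≤ (1 - β) * s + ∑ i, p i * max (T i - s) 0 := by
  rw [← hw.2, Finset.sum_mul, ← Finset.sum_add_distrib]
  refine Finset.sum_le_sum fun i _ => ?_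
  obtain ⟨hw0, hw1⟩ := hw.1 i
  have hmax : (T i - s) * w i ≤ max (T i - s) 0 :=
    (mul_le_mul_of_nonneg_right (le_max_left _ 0) hw0).trans
      (mul_le_of_le_one_right (le_max_right _ _) hw1)
  linear_combination mul_le_mul_of_nonneg_left hmax (hp i).le

/-- The bound `sum_mul_le_of_mem_Wset` is attained at a quantile. -/
lemma IsQuantile.exists_mem_Wset (hp : ∀ i, 0 < p i) (hsum : ∑ i, p i = 1)
    {β s : ℝ} (hβ : β ∈ Set.Icc (0 : ℝ) 1) (hs : IsQuantile p T β s) :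
    ∃ w ∈ Wset p β, ∑ i, T i * p i * w i = (1 - β) * s + ∑ i, p i * max (T i - s) 0 := by
  let w : ℝ → Fin n → ℝ := fun c i => if s < T i then 1 else if s ≤ T i then c else 0
  have hcont : ContinuousOn (fun c => ∑ i, w c i * p i) (Set.Icc 0 1) := by
    refine Continuous.continuousOn (continuous_finsetSum _ fun i _ => ?_)
    simp only [w]
    split_ifs <;> fun_prop
  have hmem : 1 - β ∈ Set.Icc (∑ i, w 0 i * p i) (∑ i, w 1 i * p i) := by
    refine ⟨(hs.sum_lt_le hp hsum hβ).trans' (Finset.sum_le_sum fun i _ => ?_),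
      (hs.le_sum_le hp hsum hβ).trans (Finset.sum_le_sum fun i _ => ?_)⟩ <;>
    · simp only [w]
      split_ifs <;> simp [(hp i).le]
  obtain ⟨c, hc, hcβ⟩ := intermediate_value_Icc zero_le_one hcont hmem
  refine ⟨w c, ⟨fun i => ?_, hcβ⟩, ?_⟩
  · simp only [w]
    split_ifs
    exacts [by simp, hc, by simp]
  · rw [← hcβ, Finset.sum_mul, ← Finset.sum_add_distrib]
    refine Finset.sum_congr rfl fun i _ => ?_
    rcases lt_trichotomy s (T i) with h | h | h
    · simp only [w, if_pos h, max_eq_left (sub_nonneg.2 h.le)]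
      ring
    · simp only [w, ← h, lt_irrefl, if_false, le_refl, if_true, sub_self, max_self]
      ring
    · simp [w, h.not_ge, h.not_gt, h.le]

end DiscreteQuantile

/-- The dual-based bilinear formulation computes the α–γ expectation: the
infimum over all `(s, θ, w')` with `θ_i ≥ 0`, `θ_i + s·p_i ≥ T_i·p_i` and
`w' ∈ W_γ` of `(1/(γ−α))·((1−α)s + Σ_i θ_i − Σ_i T_i p_i w'_i)` equals
`E_{α,γ}(μ_T)`. -/
theorem dual_bilinear_formulation_eq_alpha_gamma_expectation
    {n : ℕ} (hn : 1 ≤ n) (p T : Fin n → ℝ)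
    (hp : ∀ i, 0 < p i) (hsum : ∑ i, p i = 1)
    (α γ : ℝ) (h0 : 0 ≤ α) (h1 : α < γ) (h2 : γ ≤ 1) :
    sInf {v : ℝ | ∃ (s : ℝ) (θ : Fin n → ℝ) (w' : Fin n → ℝ),
        (∀ i, 0 ≤ θ i ∧ T i * p i ≤ θ i + s * p i) ∧
        w' ∈ Wset p γ ∧
        v = (1 / (γ - α)) *
          ((1 - α) * s + ∑ i, θ i - ∑ i, T i * p i * w' i)} =
      dEag p T α γ := by
  have hα : α ∈ Set.Icc (0 : ℝ) 1 := ⟨h0, h1.le.trans h2⟩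
  have hγ : γ ∈ Set.Icc (0 : ℝ) 1 := ⟨h0.trans h1.le, h2⟩
  have hc : 0 ≤ 1 / (γ - α) := (one_div_pos.2 (sub_pos.2 h1)).le
  obtain ⟨a, ha⟩ := exists_isQuantile (T := T) hp hsum hα.1 hα.2
  obtain ⟨b, hb⟩ := exists_isQuantile (T := T) hp hsum hγ.1 hγ.2
  have hsplit : ∫ q in α..γ, dFinv p T q =
      (∫ q in α..1, dFinv p T q) - ∫ q in γ..1, dFinv p T q :=
    eq_sub_of_add_eq (intervalIntegral.integral_add_adjacent_intervals
      (intervalIntegrable_comp_dFinv hp hsum measurable_id hα hγ)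
      (intervalIntegrable_comp_dFinv hp hsum measurable_id hγ (by simp)))
  rw [dEag, hsplit]
  refine IsLeast.csInf_eq ⟨?_, ?_⟩
  · obtain ⟨w, hw, hwb⟩ := hb.exists_mem_Wset hp hsum hγ
    refine ⟨a, fun i => p i * max (T i - a) 0, w, fun i => ⟨?_, ?_⟩, hw, ?_⟩
    · exact mul_nonneg (hp i).le (le_max_right _ _)
    · linear_combination mul_le_mul_of_nonneg_left (le_max_left (T i - a) 0) (hp i).le
    · rw [ha.integral_dFinv_eq hp hsum hα, hb.integral_dFinv_eq hp hsum hγ, hwb]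
  · rintro _ ⟨s, θ, w, hθ, hw, rfl⟩
    refine mul_le_mul_of_nonneg_left (sub_le_sub ?_ ?_) hc
    · refine (integral_dFinv_le hp hsum hα s).trans
        (add_le_add_right (Finset.sum_le_sum fun i _ => ?_) _)
      rw [mul_max_of_nonneg _ _ (hp i).le, mul_zero]
      exact max_le (by linear_combination (hθ i).2) (hθ i).1
    · rw [hb.integral_dFinv_eq hp hsum hγ]
      exact sum_mul_le_of_mem_Wset hp hw b
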